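/- arXiv:2406.04715 — 6 statements merged into one kernel-verified Lean document; each statement's English description precedes it below -/
import Mathlib

section
/- Let 𝒫 be the quotient of ℂ² ∖ {(0,0)} by the identification v ∼ −v. For (α,β) ∈ ℂ² ∖ {(0,0)} define A_{(α,β)} := [[1+αβ, α²],[−β², 1−αβ]]. Then the map F₂ : 𝒫 → X̃₂ defined by F₂([(α,β)]) = A_{(α,β)} is a well-defined bijection onto X̃₂ = {A ∈ SL(2,ℂ) : tr A = 2, A ≠ I, A ≠ −I}. -/
/-!
The matrix `[[1 + αβ, α²], [-β², 1 - αβ]]` records the monomials `α²`, `β²` and `αβ`, and these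
determine `(α, β)` exactly up to a common sign. A matrix `[[1 + x, p], [-q, 1 - x]]` of trace `2`
has determinant `1` exactly when `x² = pq`. Given square roots `α` of `p` and `β` of `q`, this says
`(αβ)² = x²`, so `αβ = x` after changing the sign of `β` if necessary.
-/

open Matrix

/-- `X̃_t`: the set of matrices in `SL(2,ℂ)` of trace `t`, other than `±I`. -/
def XtM (t : ℂ) : Set (Matrix (Fin 2) (Fin 2) ℂ) :=
  {A | A.det = 1 ∧ A.trace = t ∧ A ≠ 1 ∧ A ≠ -1}

/-- The matrix `A_{(α,β)} = [[1+αβ, α²],[−β², 1−αβ]]`. -/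
def Apar (v : ℂ × ℂ) : Matrix (Fin 2) (Fin 2) ℂ :=
  !![1 + v.1 * v.2, v.1 ^ 2; -v.2 ^ 2, 1 - v.1 * v.2]

/-- The setoid on `ℂ² ∖ {(0,0)}` identifying `v` with `−v`; the quotient is `𝒫`. -/
def negSetoidP : Setoid {v : ℂ × ℂ // v ≠ 0} where
  r v w := v.1 = w.1 ∨ v.1 = -w.1
  iseqv := by
    constructor
    · intro v; exact Or.inl rfl
    · rintro v w (h | h)
      · exact Or.inl h.symm
      · exact Or.inr (by rw [h, neg_neg])
    · rintro u v w (h | h) (h' | h')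
      · exact Or.inl (h.trans h')
      · exact Or.inr (by rw [h, h'])
      · exact Or.inr (by rw [h, h'])
      · exact Or.inl (by rw [h, h', neg_neg])

section Monomials

variable {R : Type*} [CommRing R] [NoZeroDivisors R]

theorem sq_eq_sq_and_sq_eq_sq_and_mul_eq_mul_iff {a b c d : R} :
    a ^ 2 = c ^ 2 ∧ b ^ 2 = d ^ 2 ∧ a * b = c * d ↔ a = c ∧ b = d ∨ a = -c ∧ b = -d := by
  constructor
  · rintro ⟨ha, hb, hab⟩
    by_cases hc : c = 0
    · have ha₀ : a = 0 := by simpa [hc] using ha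
      simpa [ha₀, hc] using sq_eq_sq_iff_eq_or_eq_neg.mp hb
    · rcases sq_eq_sq_iff_eq_or_eq_neg.mp ha with rfl | rfl
      · exact Or.inl ⟨rfl, mul_left_cancel₀ hc hab⟩
      · exact Or.inr ⟨rfl, mul_left_cancel₀ hc (by linear_combination -hab)⟩
  · rintro (⟨rfl, rfl⟩ | ⟨rfl, rfl⟩) <;> simp

theorem exists_sq_eq_and_sq_eq_and_mul_eq {p q x : R} (hp : IsSquare p) (hq : IsSquare q)
    (hx : x ^ 2 = p * q) : ∃ a b : R, a ^ 2 = p ∧ b ^ 2 = q ∧ a * b = x := by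
  obtain ⟨a, rfl⟩ := hp.exists_sq
  obtain ⟨b, rfl⟩ := hq.exists_sq
  rw [← mul_pow] at hx
  rcases sq_eq_sq_iff_eq_or_eq_neg.mp hx with h | h
  · exact ⟨a, b, rfl, rfl, h.symm⟩
  · exact ⟨a, -b, rfl, neg_sq b, by rw [mul_neg, h]⟩

end Monomials

theorem det_eq_one_iff_of_trace_eq_two {R : Type*} [CommRing R] {A : Matrix (Fin 2) (Fin 2) R}
    (htr : A.trace = 2) : A.det = 1 ↔ (A 0 0 - 1) ^ 2 = A 0 1 * -A 1 0 := by
  rw [trace_fin_two] at htr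
  rw [det_fin_two]
  constructor <;> intro h <;> linear_combination A 0 0 * htr - h

/-- The matrix of the symplectic transvection `x ↦ x + ω(u, x) u`, where `u = (α, -β)` for
`v = (α, β)` and `ω(u, x) = u₁ x₂ - u₂ x₁`. Over `ℂ` it is `Apar v`. -/
def symplecticTransvection {R : Type*} [CommRing R] (v : R × R) : Matrix (Fin 2) (Fin 2) R :=
  !![1 + v.1 * v.2, v.1 ^ 2; -v.2 ^ 2, 1 - v.1 * v.2]

/-- The matrices in `SL(2, R)` of trace `t` other than `±1`, which over a domain are the scalar
ones; for `R = ℂ` this is `X̃_t`. -/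
def nonscalarSLOfTrace (R : Type*) [CommRing R] (t : R) : Set (Matrix (Fin 2) (Fin 2) R) :=
  {A | A.det = 1 ∧ A.trace = t ∧ A ≠ 1 ∧ A ≠ -1}

/-- The identification `v ∼ -v` of nonzero elements; for `M = ℂ × ℂ` its quotient is `𝒫`. -/
def nonzeroNegSetoid (M : Type*) [Zero M] [InvolutiveNeg M] : Setoid {v : M // v ≠ 0} where
  r v w := v.1 = w.1 ∨ v.1 = -w.1
  iseqv := {
    refl := fun _ => Or.inl rfl
    symm := fun h => h.imp Eq.symm fun h => (neg_eq_iff_eq_neg.mpr h).symm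
    trans := by
      rintro u v w (huv | huv) (hvw | hvw) <;> simp [huv, hvw] }

section Transvection

variable {R : Type*} [CommRing R]

theorem det_symplecticTransvection (v : R × R) : (symplecticTransvection v).det = 1 := by
  rw [symplecticTransvection, det_fin_two_of]
  ring

theorem trace_symplecticTransvection (v : R × R) : (symplecticTransvection v).trace = 2 := by
  rw [symplecticTransvection, trace_fin_two_of]
  ring

theorem symplecticTransvection_zero : symplecticTransvection (0 : R × R) = 1 := by
  simp [symplecticTransvection, one_fin_two]

variable [NoZeroDivisors R]

theorem symplecticTransvection_eq_iff {v w : R × R} :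
    symplecticTransvection v = symplecticTransvection w ↔ v = w ∨ v = -w := by
  have entries : symplecticTransvection v = symplecticTransvection w ↔
      v.1 ^ 2 = w.1 ^ 2 ∧ v.2 ^ 2 = w.2 ^ 2 ∧ v.1 * v.2 = w.1 * w.2 := by
    constructor
    · intro h
      have h₀₀ : 1 + v.1 * v.2 = 1 + w.1 * w.2 := congr_fun₂ h 0 0
      have h₀₁ : v.1 ^ 2 = w.1 ^ 2 := congr_fun₂ h 0 1
      have h₁₀ : -v.2 ^ 2 = -w.2 ^ 2 := congr_fun₂ h 1 0
      exact ⟨h₀₁, neg_inj.mp h₁₀, add_left_cancel h₀₀⟩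
    · rintro ⟨h₁, h₂, h₁₂⟩
      rw [symplecticTransvection, symplecticTransvection, h₁, h₂, h₁₂]
  rw [entries, sq_eq_sq_and_sq_eq_sq_and_mul_eq_mul_iff, Prod.ext_iff, Prod.ext_iff,
    Prod.fst_neg, Prod.snd_neg]

theorem eq_zero_of_isDiag_symplecticTransvection {v : R × R}
    (h : (symplecticTransvection v).IsDiag) : v = 0 := by
  have h₁ : v.1 ^ 2 = 0 := h zero_ne_one
  have h₂ : -v.2 ^ 2 = 0 := h one_ne_zero
  exact Prod.ext (eq_zero_of_pow_eq_zero h₁) (eq_zero_of_pow_eq_zero (neg_eq_zero.mp h₂))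

theorem symplecticTransvection_mem_nonscalarSLOfTrace_iff {v : R × R} :
    symplecticTransvection v ∈ nonscalarSLOfTrace R 2 ↔ v ≠ 0 := by
  constructor
  · rintro ⟨-, -, hne, -⟩ rfl
    exact hne symplecticTransvection_zero
  · intro hv
    have not_isDiag := mt eq_zero_of_isDiag_symplecticTransvection hv
    refine ⟨det_symplecticTransvection v, trace_symplecticTransvection v,
      fun h => not_isDiag ?_, fun h => not_isDiag ?_⟩
    · exact h ▸ isDiag_one
    · exact h ▸ isDiag_one.neg

theorem exists_symplecticTransvection_eq (hsq : ∀ x : R, IsSquare x) {A : Matrix (Fin 2) (Fin 2) R}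
    (hdet : A.det = 1) (htr : A.trace = 2) : ∃ v, symplecticTransvection v = A := by
  obtain ⟨a, b, ha, hb, hab⟩ := exists_sq_eq_and_sq_eq_and_mul_eq (hsq (A 0 1)) (hsq (-A 1 0))
    ((det_eq_one_iff_of_trace_eq_two htr).mp hdet)
  have h₁₁ : A 1 1 = 1 - (A 0 0 - 1) := by
    rw [trace_fin_two] at htr
    linear_combination htr
  refine ⟨(a, b), ?_⟩
  rw [symplecticTransvection, eta_fin_two A, ha, hb, hab, h₁₁, neg_neg, add_sub_cancel]

end Transvection

theorem bijection_P_to_X2_general {R : Type*} [CommRing R] [NoZeroDivisors R]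
    (hsq : ∀ x : R, IsSquare x) :
    ∃ F : Quotient (nonzeroNegSetoid (R × R)) → nonscalarSLOfTrace R 2,
      (∀ v : {v : R × R // v ≠ 0},
        (F (Quotient.mk _ v) : Matrix (Fin 2) (Fin 2) R) = symplecticTransvection v.1) ∧
      Function.Bijective F := by
  refine ⟨Quotient.lift
      (fun v => ⟨symplecticTransvection v.1,
        symplecticTransvection_mem_nonscalarSLOfTrace_iff.mpr v.2⟩)
      fun _ _ h => Subtype.ext (symplecticTransvection_eq_iff.mpr h),
    fun _ => rfl, ?injective, ?surjective⟩
  case injective =>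
    rintro ⟨v⟩ ⟨w⟩ h
    exact Quotient.sound (symplecticTransvection_eq_iff.mp (congrArg Subtype.val h))
  case surjective =>
    rintro ⟨A, hA⟩
    obtain ⟨v, rfl⟩ := exists_symplecticTransvection_eq hsq hA.1 hA.2.1
    exact ⟨Quotient.mk _ ⟨v, symplecticTransvection_mem_nonscalarSLOfTrace_iff.mp hA⟩, rfl⟩

/-- the map `F₂ : 𝒫 → X̃₂`, `F₂([(α,β)]) = A_{(α,β)}`, is a well-defined
bijection onto `X̃₂`. -/
theorem bijection_P_to_X2 :
    ∃ F₂ : Quotient negSetoidP → ↥(XtM 2),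
      (∀ v : {v : ℂ × ℂ // v ≠ 0},
        ((F₂ (Quotient.mk negSetoidP v) : Matrix (Fin 2) (Fin 2) ℂ)) = Apar v.1) ∧
      Function.Bijective F₂ :=
  bijection_P_to_X2_general IsAlgClosed.exists_eq_mul_self
end

section
/- Let t ∈ ℂ ∖ {2,−2} and let λ ∈ ℂ* satisfy λ + λ⁻¹ = t. Let ℳ := {(α,β,γ) ∈ ℂ³ : α(1−α) + βγ = 0}. For (α,β,γ) ∈ ℳ define A^λ_{(α,β,γ)} := [[αλ + (1−α)λ⁻¹, (λ−λ⁻¹)β],[−(λ−λ⁻¹)γ, (1−α)λ + αλ⁻¹]]. Then the map F_t : ℳ → X̃_t defined by F_t(α,β,γ) = A^λ_{(α,β,γ)} is a bijection onto X̃_t = {A ∈ SL(2,ℂ) : tr A = t, A ≠ I, A ≠ −I}. -/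
open Matrix

/-- The matrix `A^λ_{(α,β,γ)}`. -/
noncomputable def Aloxo (lam : ℂ) (m : ℂ × ℂ × ℂ) : Matrix (Fin 2) (Fin 2) ℂ :=
  !![m.1 * lam + (1 - m.1) * lam⁻¹, (lam - lam⁻¹) * m.2.1;
     -((lam - lam⁻¹) * m.2.2), (1 - m.1) * lam + m.1 * lam⁻¹]

/-!
Put `P = !![α, β; -γ, 1 - α]`. As `(α, β, γ)` runs over `ℳ`, the matrix `P` runs over the matrices
of trace `1` and determinant `0`, that is, over the rank-one idempotents, and
`A^λ_{(α,β,γ)} = λ P + λ⁻¹ (1 - P) = (λ - λ⁻¹) P + λ⁻¹` is the matrix acting as `λ` on the range of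
`P` and as `λ⁻¹` on its kernel. Since `t ≠ ±2` means `λ ≠ λ⁻¹`, the matrix `P` is recovered from
this one by an affine map, so that rank-one idempotents correspond to matrices of trace `λ + λ⁻¹`
and determinant `λ λ⁻¹`. Finally, `±I` are excluded by their traces `±2`.
-/

theorem smul_add_bijective {M G : Type*} [Monoid M] [AddGroup G] [MulAction M G] {r : M}
    (hr : IsUnit r) (b : G) : Function.Bijective fun a : G ↦ r • a + b :=
  (AddGroup.addRight_bijective b).comp hr.smul_bijective

section CommRing

variable {R : Type*} [CommRing R]

/-- The matrix of trace one whose first row is `(α, β)` and whose lower left entry is `-γ`. The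
sign makes its determinant `α(1-α) + βγ`, so that `ℳ` parametrizes the singular ones. -/
def traceOneMatrix (m : R × R × R) : Matrix (Fin 2) (Fin 2) R :=
  !![m.1, m.2.1; -m.2.2, 1 - m.1]

theorem trace_traceOneMatrix (m : R × R × R) : (traceOneMatrix m).trace = 1 := by
  simp [traceOneMatrix, trace_fin_two_of]

theorem det_traceOneMatrix (m : R × R × R) :
    (traceOneMatrix m).det = m.1 * (1 - m.1) + m.2.1 * m.2.2 := by
  simp [traceOneMatrix, det_fin_two_of]

theorem traceOneMatrix_of_trace_eq_one {P : Matrix (Fin 2) (Fin 2) R} (hP : P.trace = 1) :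
    traceOneMatrix (P 0 0, P 0 1, -P 1 0) = P := by
  have h11 : 1 - P 0 0 = P 1 1 := by rw [← hP, trace_fin_two, add_sub_cancel_left]
  simp [traceOneMatrix, h11, ← eta_fin_two]

theorem bijOn_traceOneMatrix :
    Set.BijOn (traceOneMatrix (R := R)) {m | m.1 * (1 - m.1) + m.2.1 * m.2.2 = 0}
      {P | P.det = 0 ∧ P.trace = 1} := by
  refine Set.InvOn.bijOn (f' := fun P ↦ (P 0 0, P 0 1, -P 1 0)) ⟨fun m _ ↦ ?_, ?_⟩ ?_ ?_
  · simp [traceOneMatrix]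
  · exact fun P hP ↦ traceOneMatrix_of_trace_eq_one hP.2
  · exact fun m hm ↦ ⟨(det_traceOneMatrix m).trans hm, trace_traceOneMatrix m⟩
  · rintro P ⟨hdet, htr⟩
    rwa [← traceOneMatrix_of_trace_eq_one htr, det_traceOneMatrix] at hdet

theorem trace_smul_add_smul_one {n : Type*} [Fintype n] [DecidableEq n] (r s : R)
    (P : Matrix n n R) : (r • P + s • 1).trace = r * P.trace + Fintype.card n * s := by
  simp [trace_add, trace_smul, mul_comm]

theorem det_smul_add_smul_one (r s : R) (P : Matrix (Fin 2) (Fin 2) R) :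
    (r • P + s • 1).det = r ^ 2 * P.det + r * s * P.trace + s ^ 2 := by
  simp only [det_fin_two, trace_fin_two, Matrix.add_apply, Matrix.smul_apply, one_apply_eq,
    smul_eq_mul, one_apply_ne zero_ne_one, one_apply_ne one_ne_zero]
  ring

theorem bijOn_sub_smul_add_smul_one {x y : R} (h : IsUnit (x - y)) :
    Set.BijOn (fun P : Matrix (Fin 2) (Fin 2) R ↦ (x - y) • P + y • 1)
      {P | P.det = 0 ∧ P.trace = 1} {A | A.det = x * y ∧ A.trace = x + y} := by
  convert (smul_add_bijective h (y • (1 : Matrix (Fin 2) (Fin 2) R))).bijOn_preimage using 1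
  ext P
  have trace_iff : (x - y) * P.trace + 2 * y = x + y ↔ P.trace = 1 := by
    refine ⟨fun e ↦ h.mul_left_cancel ?_, fun e ↦ ?_⟩
    · linear_combination e
    · linear_combination (x - y) * e
  have det_iff (hP : P.trace = 1) :
      (x - y) ^ 2 * P.det + (x - y) * y * P.trace + y ^ 2 = x * y ↔ P.det = 0 := by
    rw [hP, ← (h.pow 2).mul_right_eq_zero]
    refine ⟨fun e ↦ ?_, fun e ↦ ?_⟩ <;> linear_combination e
  simp only [Set.mem_preimage, Set.mem_ofPred_eq, det_smul_add_smul_one, trace_smul_add_smul_one,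
    Fintype.card_fin, Nat.cast_ofNat, trace_iff]
  exact and_congr_left fun hP ↦ (det_iff hP).symm

theorem sub_smul_traceOneMatrix_add_smul_one (x y : R) (m : R × R × R) :
    (x - y) • traceOneMatrix m + y • 1 =
      !![m.1 * x + (1 - m.1) * y, (x - y) * m.2.1;
         -((x - y) * m.2.2), (1 - m.1) * x + m.1 * y] := by
  simp only [traceOneMatrix, one_fin_two, smul_of, smul_cons, smul_empty, of_add_of, add_cons,
    head_cons, tail_cons, empty_add_empty, smul_eq_mul]
  ring_nf

theorem bijection_M_to_Xt_general {x y : R} (h : IsUnit (x - y)) :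
    Set.BijOn
      (fun m : R × R × R ↦
        !![m.1 * x + (1 - m.1) * y, (x - y) * m.2.1;
           -((x - y) * m.2.2), (1 - m.1) * x + m.1 * y])
      {m | m.1 * (1 - m.1) + m.2.1 * m.2.2 = 0} {A | A.det = x * y ∧ A.trace = x + y} :=
  ((bijOn_sub_smul_add_smul_one h).comp bijOn_traceOneMatrix).congr
    fun m _ ↦ sub_smul_traceOneMatrix_add_smul_one x y m

end CommRing

theorem sub_inv_ne_zero_of_add_inv_ne {K : Type*} [Field K] {x : K} (hx : x ≠ 0)
    (h2 : x + x⁻¹ ≠ 2) (h2' : x + x⁻¹ ≠ -2) : x - x⁻¹ ≠ 0 := by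
  rw [sub_ne_zero, Ne, self_eq_inv₀]
  rintro (rfl | rfl | rfl)
  · exact h2' (by norm_num)
  · exact hx rfl
  · exact h2 (by norm_num)

theorem XtM_eq_of_ne {t : ℂ} (h2 : t ≠ 2) (h2' : t ≠ -2) :
    XtM t = {A | A.det = 1 ∧ A.trace = t} := by
  ext A
  refine ⟨fun ⟨hdet, htr, _⟩ ↦ ⟨hdet, htr⟩, fun ⟨hdet, htr⟩ ↦ ⟨hdet, htr, ?_, ?_⟩⟩
  · rintro rfl
    exact h2 (by simp [← htr])
  · rintro rfl
    exact h2' (by simp [← htr])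

/-- for `t ∉ {2,−2}` and `λ ∈ ℂ*` with `λ + λ⁻¹ = t`, the map
`F_t : ℳ → X̃_t`, `(α,β,γ) ↦ A^λ_{(α,β,γ)}`, is a bijection from
`ℳ = {(α,β,γ) : α(1−α) + βγ = 0}` onto `X̃_t`. -/
theorem bijection_M_to_Xt (t lam : ℂ) (h2 : t ≠ 2) (h2' : t ≠ -2) (hlam : lam ≠ 0)
    (hlt : lam + lam⁻¹ = t) :
    Set.BijOn (Aloxo lam)
      {m : ℂ × ℂ × ℂ | m.1 * (1 - m.1) + m.2.1 * m.2.2 = 0} (XtM t) := by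
  subst hlt
  have h := bijection_M_to_Xt_general (sub_inv_ne_zero_of_add_inv_ne hlam h2 h2').isUnit
  rwa [mul_inv_cancel₀ hlam, ← XtM_eq_of_ne h2 h2'] at h
end

section
/- Let t ∈ ℂ. Give SL(2,ℂ) the subspace topology from the 2×2 complex matrices, give X̃_t the subspace topology, and give the set H̃_t\SL(2,ℂ) of right cosets (the quotient of SL(2,ℂ) by the relation x ∼ y ⇔ xy⁻¹ ∈ H̃_t) the quotient topology. Then the map F : H̃_t\SL(2,ℂ) → X̃_t defined by F(H̃_t g) = g⁻¹ A_t g is a well-defined homeomorphism. -/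
/-!
`SL(2,ℂ)` acts on the conjugacy class of `A_t` by conjugation, and `H̃_t` is the centralizer of
`A_t`. A σ-compact group acting continuously and transitively on a Baire Hausdorff space has open
orbit maps, so the bijection from the coset space to the orbit is a homeomorphism.

It remains to see that `X̃_t` is a single conjugacy class. A `2 × 2` matrix `B` that is not scalar
has a cyclic row vector `v`, and in the basis `v, v B` it becomes the companion matrix of its
characteristic polynomial; over an algebraically closed field the change of basis can be rescaled
to have determinant `1`. The trace `t` is thus a complete invariant away from `±I`.
-/

open Matrix

abbrev SL2C := Matrix.SpecialLinearGroup (Fin 2) ℂ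

/-- The subspace topology on `SL(2,ℂ)` from the `2×2` complex matrices. -/
noncomputable instance : TopologicalSpace SL2C :=
  TopologicalSpace.induced (fun A => (A : Matrix (Fin 2) (Fin 2) ℂ)) inferInstance

/-- `X̃_t`: the set of elements of `SL(2,ℂ)` of trace `t`, other than `±I`. -/
def XtSL (t : ℂ) : Set SL2C :=
  {A | Matrix.trace (A : Matrix (Fin 2) (Fin 2) ℂ) = t ∧
    (A : Matrix (Fin 2) (Fin 2) ℂ) ≠ 1 ∧ (A : Matrix (Fin 2) (Fin 2) ℂ) ≠ -1}

/-- `H̃_{±2}`: the elements `ε'·[[1,μ],[0,1]]` of `SL(2,ℂ)`, `ε' ∈ {1,−1}`, `μ ∈ ℂ`. -/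
def HparSL : Set SL2C :=
  {B | ∃ ε μ : ℂ, (ε = 1 ∨ ε = -1) ∧ (B : Matrix (Fin 2) (Fin 2) ℂ) = !![ε, μ; 0, ε]}

/-- `H̃_t` (`t ≠ ±2`): the diagonal matrices `[[μ,0],[0,μ⁻¹]]`, `μ ∈ ℂ*`. -/
def HdiagSL : Set SL2C :=
  {B | ∃ μ : ℂ, μ ≠ 0 ∧ (B : Matrix (Fin 2) (Fin 2) ℂ) = !![μ, 0; 0, μ⁻¹]}

open Topology MulAction QuotientGroup

section OrbitMap

variable {G X : Type*} [Group G] [MulAction G X]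

lemma ker_inv_smul_eq_rightRel_stabilizer (x : X) :
    Setoid.ker (fun g : G => g⁻¹ • x) = rightRel (stabilizer G x) := by
  ext g h
  rw [rightRel_apply, mem_stabilizer_iff, mul_smul, smul_eq_iff_eq_inv_smul]
  rfl

variable [TopologicalSpace G] [IsTopologicalGroup G] [SigmaCompactSpace G] [TopologicalSpace X]
  [BaireSpace X] [T2Space X] [ContinuousSMul G X] [IsPretransitive G X]

lemma isQuotientMap_inv_smul (x : X) : IsQuotientMap (fun g : G => g⁻¹ • x) := by
  refine IsOpenMap.isQuotientMap ?_ (by fun_prop) ?_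
  · exact (isOpenMap_smul_of_sigmaCompact x).comp (Homeomorph.inv G).isOpenMap
  · exact (surjective_smul G x).comp inv_surjective

theorem exists_homeomorph_rightCosets_stabilizer (x : X) :
    ∃ F : Quotient (rightRel (stabilizer G x)) ≃ₜ X, ∀ g : G, F (Quotient.mk _ g) = g⁻¹ • x := by
  rw [← ker_inv_smul_eq_rightRel_stabilizer]
  let f : C(G, X) := ⟨fun g => g⁻¹ • x, by fun_prop⟩
  have hf : IsQuotientMap f := isQuotientMap_inv_smul x
  exact ⟨hf.homeomorph, fun _ => rfl⟩

end OrbitMap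

section ConjugacyClass

variable {G : Type*} [Group G] (x : G)

/-- The conjugation action `g • y = g * y * g⁻¹` of a group on one of its conjugacy classes. -/
instance conjugatesOfMulAction : MulAction G (conjugatesOf x) where
  smul g y := ⟨g * y * g⁻¹, y.2.trans (isConj_iff.2 ⟨g, rfl⟩)⟩
  one_smul y := Subtype.ext (by change 1 * (y : G) * 1⁻¹ = y; group)
  mul_smul g h y := Subtype.ext (by
    change g * h * (y : G) * (g * h)⁻¹ = g * (h * y * h⁻¹) * g⁻¹; group)

lemma coe_smul_conjugatesOf (g : G) (y : conjugatesOf x) :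
    ((g • y : conjugatesOf x) : G) = g * y * g⁻¹ := rfl

instance isPretransitive_conjugatesOf : IsPretransitive G (conjugatesOf x) :=
  (isPretransitive_iff_base ⟨x, mem_conjugatesOf_self⟩).2 fun y =>
    (isConj_iff.1 y.2).imp fun _ hg => Subtype.ext hg

lemma stabilizer_conjugatesOf :
    stabilizer G (⟨x, mem_conjugatesOf_self⟩ : conjugatesOf x) = Subgroup.centralizer {x} := by
  ext g
  rw [mem_stabilizer_iff, Subtype.ext_iff, coe_smul_conjugatesOf,
    Subgroup.mem_centralizer_singleton_iff, mul_inv_eq_iff_eq_mul]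

variable [TopologicalSpace G] [IsTopologicalGroup G]

instance continuousSMul_conjugatesOf : ContinuousSMul G (conjugatesOf x) where
  continuous_smul := Continuous.subtype_mk
    (f := fun p : G × conjugatesOf x => p.1 * p.2 * p.1⁻¹) (by fun_prop) _

theorem exists_homeomorph_rightCosets_centralizer [SigmaCompactSpace G] [T2Space G]
    [BaireSpace (conjugatesOf x)] :
    ∃ F : Quotient (rightRel (Subgroup.centralizer {x})) ≃ₜ conjugatesOf x,
      ∀ g : G, (F (Quotient.mk _ g) : G) = g⁻¹ * x * g := by
  rw [← stabilizer_conjugatesOf]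
  obtain ⟨F, hF⟩ := exists_homeomorph_rightCosets_stabilizer (G := G)
    (⟨x, mem_conjugatesOf_self⟩ : conjugatesOf x)
  exact ⟨F, fun g => by rw [hF, coe_smul_conjugatesOf, inv_inv]⟩

end ConjugacyClass

section Krylov

variable {R : Type*} [CommRing R]

/-- The Krylov matrix of a row vector `v` and a `2 × 2` matrix `B`, with rows `v` and `v B`. It is
invertible exactly when `v` is a cyclic vector, and it then conjugates `B` to a companion matrix. -/
def krylovMatrix (v : Fin 2 → R) (B : Matrix (Fin 2) (Fin 2) R) : Matrix (Fin 2) (Fin 2) R :=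
  Matrix.of ![v, v ᵥ* B]

lemma krylovMatrix_mul_self (v : Fin 2 → R) (B : Matrix (Fin 2) (Fin 2) R) :
    krylovMatrix v B * B = !![0, 1; -B.det, B.trace] * krylovMatrix v B := by
  rw [← Matrix.ext_iff]
  simp only [krylovMatrix, Matrix.mul_apply, det_fin_two, trace_fin_two, of_apply, cons_val',
    cons_val_zero, vecMul, dotProduct, Fin.sum_univ_two, cons_val_one, cons_val_fin_one,
    Fin.forall_fin_two]
  -- The second row is the Cayley–Hamilton theorem, `v B² = tr B • v B - det B • v`.
  refine ⟨⟨?_, ?_⟩, ?_, ?_⟩ <;> ring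

lemma det_krylovMatrix (p q : R) (B : Matrix (Fin 2) (Fin 2) R) :
    (krylovMatrix ![p, q] B).det =
      p ^ 2 * B 0 1 + p * q * (B 1 1 - B 0 0) - q ^ 2 * B 1 0 := by
  simp only [krylovMatrix, det_fin_two, of_apply, cons_val', cons_val_zero, vecMul, dotProduct,
    Fin.sum_univ_two, cons_val_one, cons_val_fin_one]
  ring

lemma exists_det_krylovMatrix_ne_zero {B : Matrix (Fin 2) (Fin 2) R}
    (hB : B ∉ Set.range (Matrix.scalar (Fin 2))) : ∃ v, (krylovMatrix v B).det ≠ 0 := by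
  contrapose! hB
  have h01 : B 0 1 = 0 := by simpa [det_krylovMatrix] using hB ![1, 0]
  have h10 : B 1 0 = 0 := by simpa [det_krylovMatrix] using hB ![0, 1]
  have h11 : B 1 1 = B 0 0 := by simpa [det_krylovMatrix, h01, h10, sub_eq_zero] using hB ![1, 1]
  refine ⟨B 0 0, ?_⟩
  ext i j
  fin_cases i <;> fin_cases j <;> simp [h01, h10, h11]

end Krylov

section Conjugacy

variable {K : Type*} [Field K]

lemma exists_intertwiner_of_det_eq_of_trace_eq {A B : Matrix (Fin 2) (Fin 2) K}
    (hA : A ∉ Set.range (Matrix.scalar (Fin 2))) (hB : B ∉ Set.range (Matrix.scalar (Fin 2)))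
    (hdet : A.det = B.det) (htrace : A.trace = B.trace) :
    ∃ M : Matrix (Fin 2) (Fin 2) K, M.det ≠ 0 ∧ M * A = B * M := by
  obtain ⟨v, hv⟩ := exists_det_krylovMatrix_ne_zero hA
  obtain ⟨w, hw⟩ := exists_det_krylovMatrix_ne_zero hB
  set P := krylovMatrix v A
  set Q := krylovMatrix w B
  set C : Matrix (Fin 2) (Fin 2) K := !![0, 1; -B.det, B.trace]
  have hP : P * A = C * P := by rw [krylovMatrix_mul_self, hdet, htrace]
  have hQ : Q * B = C * Q := krylovMatrix_mul_self w B
  have hQ_unit : IsUnit Q.det := hw.isUnit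
  refine ⟨Q⁻¹ * P, ?_, ?_⟩
  · rw [Matrix.det_mul]
    exact mul_ne_zero (Matrix.isUnit_nonsing_inv_det Q hQ_unit).ne_zero hv
  · calc Q⁻¹ * P * A = Q⁻¹ * (C * Q) * Q⁻¹ * P := by
          rw [mul_assoc, hP, mul_assoc Q⁻¹, Matrix.mul_nonsing_inv_cancel_right _ _ hQ_unit,
            mul_assoc]
      _ = B * (Q⁻¹ * P) := by
          rw [← hQ, Matrix.nonsing_inv_mul_cancel_left _ _ hQ_unit, mul_assoc]

lemma exists_det_smul_eq_one [IsAlgClosed K] {n : Type*} [Fintype n] [DecidableEq n] [Nonempty n]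
    {M : Matrix n n K} (hM : M.det ≠ 0) : ∃ c : K, (c • M).det = 1 := by
  obtain ⟨c, hc⟩ := IsAlgClosed.exists_pow_nat_eq M.det⁻¹ (Fintype.card_pos (α := n))
  exact ⟨c, by rw [Matrix.det_smul, hc, inv_mul_cancel₀ hM]⟩

lemma mem_center_SL_of_coe_mem_range_scalar {n R : Type*} [Fintype n] [DecidableEq n] [CommRing R]
    {A : Matrix.SpecialLinearGroup n R}
    (hA : (A : Matrix n n R) ∈ Set.range (Matrix.scalar n)) :
    A ∈ Subgroup.center (Matrix.SpecialLinearGroup n R) := by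
  obtain ⟨r, hr⟩ := hA
  refine Matrix.SpecialLinearGroup.mem_center_iff.2 ⟨r, ?_, hr⟩
  simpa using (congrArg Matrix.det hr).trans A.det_coe

lemma trace_coe_eq_of_isConj {n R : Type*} [Fintype n] [DecidableEq n] [CommRing R]
    {A B : Matrix.SpecialLinearGroup n R} (h : IsConj A B) :
    (A : Matrix n n R).trace = (B : Matrix n n R).trace := by
  obtain ⟨g, rfl⟩ := isConj_iff.1 h
  rw [Matrix.SpecialLinearGroup.coe_mul, Matrix.trace_mul_comm, ← Matrix.SpecialLinearGroup.coe_mul,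
    inv_mul_cancel_left]

theorem isConj_SL2_of_trace_eq [IsAlgClosed K] {A B : Matrix.SpecialLinearGroup (Fin 2) K}
    (hA : A ∉ Subgroup.center (Matrix.SpecialLinearGroup (Fin 2) K))
    (hB : B ∉ Subgroup.center (Matrix.SpecialLinearGroup (Fin 2) K))
    (htrace : (A : Matrix (Fin 2) (Fin 2) K).trace = (B : Matrix (Fin 2) (Fin 2) K).trace) :
    IsConj A B := by
  obtain ⟨M, hM, hMA⟩ := exists_intertwiner_of_det_eq_of_trace_eq
    (mt mem_center_SL_of_coe_mem_range_scalar hA) (mt mem_center_SL_of_coe_mem_range_scalar hB)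
    (A.det_coe.trans B.det_coe.symm) htrace
  obtain ⟨c, hc⟩ := exists_det_smul_eq_one hM
  refine isConj_iff.2 ⟨⟨c • M, hc⟩, mul_inv_eq_iff_eq_mul.2 (Subtype.ext ?_)⟩
  change c • M * (A : Matrix (Fin 2) (Fin 2) K) = B * c • M
  rw [Matrix.smul_mul, Matrix.mul_smul, hMA]

end Conjugacy

lemma mem_center_SL2_iff_eq_one_or_eq_neg_one {R : Type*} [CommRing R] [NoZeroDivisors R]
    {A : Matrix.SpecialLinearGroup (Fin 2) R} :
    A ∈ Subgroup.center (Matrix.SpecialLinearGroup (Fin 2) R) ↔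
      (A : Matrix (Fin 2) (Fin 2) R) = 1 ∨ (A : Matrix (Fin 2) (Fin 2) R) = -1 := by
  rw [Matrix.SpecialLinearGroup.mem_center_iff, Fintype.card_fin]
  constructor
  · rintro ⟨r, hr, hA⟩
    rcases mul_self_eq_one_iff.1 ((sq r).symm.trans hr) with rfl | rfl
    · exact .inl (by rw [← hA, map_one])
    · exact .inr (by rw [← hA, map_neg, map_one])
  · rintro (hA | hA)
    · exact ⟨1, one_pow 2, by rw [hA, map_one]⟩
    · exact ⟨-1, neg_one_sq, by rw [hA, map_neg, map_one]⟩

lemma mem_XtSL_iff {t : ℂ} {A : SL2C} :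
    A ∈ XtSL t ↔
      (A : Matrix (Fin 2) (Fin 2) ℂ).trace = t ∧ A ∉ Subgroup.center SL2C := by
  rw [mem_center_SL2_iff_eq_one_or_eq_neg_one, not_or]
  rfl

theorem conjugatesOf_eq_XtSL {t : ℂ} {A : SL2C} (hA : A ∈ XtSL t) : conjugatesOf A = XtSL t := by
  obtain ⟨htrace, hA⟩ := mem_XtSL_iff.1 hA
  ext B
  rw [mem_XtSL_iff]
  constructor
  · intro hAB
    refine ⟨(trace_coe_eq_of_isConj hAB).symm.trans htrace, fun hB => hA ?_⟩
    rwa [IsConj.eq_of_right_mem_center hAB hB]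
  · rintro ⟨hBtrace, hB⟩
    exact isConj_SL2_of_trace_eq hA hB (htrace.trans hBtrace.symm)

namespace SL2C

lemma isClosedEmbedding_coe :
    IsClosedEmbedding (fun A : SL2C => (A : Matrix (Fin 2) (Fin 2) ℂ)) :=
  Matrix.SpecialLinearGroup.isClosedEmbedding_val

instance : IsTopologicalGroup SL2C := Matrix.SpecialLinearGroup.topologicalGroup

instance : T2Space SL2C := isClosedEmbedding_coe.isEmbedding.t2Space

instance : LocallyCompactSpace SL2C :=
  have : LocallyCompactSpace (Matrix (Fin 2) (Fin 2) ℂ) :=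
    inferInstanceAs (LocallyCompactSpace (Fin 2 → Fin 2 → ℂ))
  isClosedEmbedding_coe.locallyCompactSpace

instance : SigmaCompactSpace SL2C :=
  have : SigmaCompactSpace (Matrix (Fin 2) (Fin 2) ℂ) :=
    inferInstanceAs (SigmaCompactSpace (Fin 2 → Fin 2 → ℂ))
  isClosedEmbedding_coe.sigmaCompactSpace

end SL2C

lemma isLocallyClosed_XtSL (t : ℂ) : IsLocallyClosed (XtSL t) := by
  have hcoe := SL2C.isClosedEmbedding_coe.continuous
  have htrace : IsClosed {A : SL2C | (A : Matrix (Fin 2) (Fin 2) ℂ).trace = t} :=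
    isClosed_eq hcoe.matrix_trace continuous_const
  have hne (B : Matrix (Fin 2) (Fin 2) ℂ) :
      IsOpen {A : SL2C | (A : Matrix (Fin 2) (Fin 2) ℂ) ≠ B} :=
    isOpen_ne_fun hcoe continuous_const
  exact htrace.isLocallyClosed.inter ((hne 1).inter (hne (-1))).isLocallyClosed

theorem exists_homeomorph_XtSL {t : ℂ} {A : SL2C} (hA : A ∈ XtSL t) :
    ∃ F : Quotient (rightRel (Subgroup.centralizer {A})) ≃ₜ XtSL t,
      ∀ g : SL2C, (F (Quotient.mk _ g) : SL2C) = g⁻¹ * A * g := by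
  have : LocallyCompactSpace (XtSL t) := (isLocallyClosed_XtSL t).locallyCompactSpace
  rw [← conjugatesOf_eq_XtSL hA] at this ⊢
  exact exists_homeomorph_rightCosets_centralizer A

section Commutant

variable {R : Type*} [CommRing R]

lemma mul_jordanBlock_eq_iff {ε : R} {B : Matrix (Fin 2) (Fin 2) R} :
    B * !![ε, 1; 0, ε] = !![ε, 1; 0, ε] * B ↔ B 1 0 = 0 ∧ B 1 1 = B 0 0 := by
  rw [← Matrix.ext_iff]
  simp only [Matrix.mul_apply, of_apply, cons_val', cons_val_fin_one, Fin.sum_univ_two,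
    cons_val_zero, cons_val_one, Fin.forall_fin_two, mul_zero, add_zero, mul_one, one_mul, zero_mul,
    zero_add]
  grind

lemma mul_diag_eq_iff [NoZeroDivisors R] {a d : R} (had : a ≠ d)
    {B : Matrix (Fin 2) (Fin 2) R} :
    B * !![a, 0; 0, d] = !![a, 0; 0, d] * B ↔ B 0 1 = 0 ∧ B 1 0 = 0 := by
  rw [← Matrix.ext_iff]
  simp [Matrix.mul_apply, Fin.forall_fin_two, mul_comm _ (B _ _), had, had.symm]

end Commutant

lemma mem_centralizer_singleton_iff_coe {n R : Type*} [Fintype n] [DecidableEq n] [CommRing R]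
    {A B : Matrix.SpecialLinearGroup n R} :
    B ∈ Subgroup.centralizer {A} ↔ (B * A : Matrix n n R) = (A * B : Matrix n n R) := by
  rw [Subgroup.mem_centralizer_singleton_iff]
  exact Subtype.ext_iff

lemma coe_centralizer_eq_HparSL {ε : ℂ} {A : SL2C}
    (hA : (A : Matrix (Fin 2) (Fin 2) ℂ) = !![ε, 1; 0, ε]) :
    (Subgroup.centralizer {A} : Set SL2C) = HparSL := by
  ext B
  rw [SetLike.mem_coe, mem_centralizer_singleton_iff_coe, hA, mul_jordanBlock_eq_iff]
  constructor
  · rintro ⟨h10, h11⟩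
    have hB : (B : Matrix (Fin 2) (Fin 2) ℂ) = !![B 0 0, B 0 1; 0, B 0 0] := by
      simpa only [h10, h11] using Matrix.eta_fin_two (B : Matrix (Fin 2) (Fin 2) ℂ)
    have hdet : B 0 0 * B 0 0 = 1 := by
      simpa only [Matrix.det_fin_two, h10, h11, mul_zero, sub_zero] using B.det_coe
    exact ⟨B 0 0, B 0 1, mul_self_eq_one_iff.1 hdet, hB⟩
  · rintro ⟨δ, μ, -, hB⟩
    simp [hB]

lemma coe_centralizer_eq_HdiagSL {a d : ℂ} (had : a ≠ d) {A : SL2C}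
    (hA : (A : Matrix (Fin 2) (Fin 2) ℂ) = !![a, 0; 0, d]) :
    (Subgroup.centralizer {A} : Set SL2C) = HdiagSL := by
  ext B
  rw [SetLike.mem_coe, mem_centralizer_singleton_iff_coe, hA, mul_diag_eq_iff had]
  constructor
  · rintro ⟨h01, h10⟩
    have hdet : B 0 0 * B 1 1 = 1 := by
      simpa only [Matrix.det_fin_two, h10, mul_zero, sub_zero] using B.det_coe
    refine ⟨B 0 0, left_ne_zero_of_mul_eq_one hdet, ?_⟩
    simpa only [h01, h10, eq_inv_of_mul_eq_one_right hdet] using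
      Matrix.eta_fin_two (B : Matrix (Fin 2) (Fin 2) ℂ)
  · rintro ⟨μ, -, hB⟩
    simp [hB]

lemma jordanBlock_mem_XtSL {ε : ℂ} {A : SL2C}
    (hA : (A : Matrix (Fin 2) (Fin 2) ℂ) = !![ε, 1; 0, ε]) : A ∈ XtSL (2 * ε) := by
  refine mem_XtSL_iff.2 ⟨by rw [hA, Matrix.trace_fin_two_of, two_mul], fun hcenter => ?_⟩
  have h := Matrix.SpecialLinearGroup.scalar_eq_self_of_mem_center hcenter 0
  simpa [hA] using congrFun₂ h 0 1

lemma diag_mem_XtSL {a d : ℂ} (had : a ≠ d) {A : SL2C}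
    (hA : (A : Matrix (Fin 2) (Fin 2) ℂ) = !![a, 0; 0, d]) : A ∈ XtSL (a + d) := by
  refine mem_XtSL_iff.2 ⟨by rw [hA, Matrix.trace_fin_two_of], fun hcenter => had ?_⟩
  have h := Matrix.SpecialLinearGroup.scalar_eq_self_of_mem_center hcenter 0
  simpa [hA] using congrFun₂ h 1 1

/-- for every `t ∈ ℂ`, the map `F : H̃_t\SL(2,ℂ) → X̃_t`,
`F(H̃_t g) = g⁻¹ A_t g`, is a well-defined homeomorphism, where `H̃_t\SL(2,ℂ)` carries
the quotient topology and `X̃_t` the subspace topology. -/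
theorem homeomorph_coset_space_to_Xt :
    (∀ ε : ℂ, (ε = 1 ∨ ε = -1) → ∀ At : SL2C,
      (At : Matrix (Fin 2) (Fin 2) ℂ) = !![ε, 1; 0, ε] →
      ∀ H : Subgroup SL2C, (H : Set SL2C) = HparSL →
      ∃ F : Quotient (QuotientGroup.rightRel H) ≃ₜ ↥(XtSL (2 * ε)),
        ∀ g : SL2C, ((F (Quotient.mk (QuotientGroup.rightRel H) g) : SL2C)
          = g⁻¹ * At * g)) ∧
    (∀ t lam : ℂ, t ≠ 2 → t ≠ -2 → lam ≠ 0 → lam + lam⁻¹ = t →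
      ∀ At : SL2C, (At : Matrix (Fin 2) (Fin 2) ℂ) = !![lam, 0; 0, lam⁻¹] →
      ∀ H : Subgroup SL2C, (H : Set SL2C) = HdiagSL →
      ∃ F : Quotient (QuotientGroup.rightRel H) ≃ₜ ↥(XtSL t),
        ∀ g : SL2C, ((F (Quotient.mk (QuotientGroup.rightRel H) g) : SL2C)
          = g⁻¹ * At * g)) := by
  constructor
  · intro ε _ A hA H hH
    obtain rfl : H = Subgroup.centralizer {A} :=
      SetLike.coe_injective (hH.trans (coe_centralizer_eq_HparSL hA).symm)
    exact exists_homeomorph_XtSL (jordanBlock_mem_XtSL hA)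
  · rintro t lam ht2 ht2' h0 rfl A hA H hH
    have hne : lam ≠ lam⁻¹ := by
      rw [ne_eq, self_eq_inv₀]
      rintro (rfl | rfl | rfl) <;> norm_num at *
    obtain rfl : H = Subgroup.centralizer {A} :=
      SetLike.coe_injective (hH.trans (coe_centralizer_eq_HdiagSL hne hA).symm)
    exact exists_homeomorph_XtSL (diag_mem_XtSL hne hA)
end

section
/- For every t ∈ ℂ, the subset X̃_t generates SL(2,ℂ) as a group, i.e. the subgroup of SL(2,ℂ) generated by X̃_t is all of SL(2,ℂ). -/
/-!
If a field `F` contains some `a ≠ 0` with `a ^ 2 ≠ 1`, then `SL(2, F)` is perfect and its quotient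
`PSL(2, F)` by the centre is simple, so every normal subgroup of `SL(2, F)` is either central or
the whole group. Over a domain `±1` are the only central elements of `SL(2, F)`, so `X̃_t` consists
of the noncentral elements of trace `t`. It is stable under conjugation, hence generates a normal
subgroup, and this subgroup is not central because `X̃_t` contains the companion matrix of
`X ^ 2 - t X + 1`.
-/

open Matrix

open Subgroup
open scoped MatrixGroups

section Group

variable {G : Type*} [Group G]

theorem normal_closure_of_conj_mem {s : Set G} (hs : ∀ a ∈ s, ∀ g, g * a * g⁻¹ ∈ s) :
    (closure s).Normal :=
  normalizer_eq_top_iff.1 <| top_le_iff.1 <|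
    le_normalizer_closure_iff.2 fun g _ a ha ↦ subset_closure (hs a ha g)

theorem eq_top_of_normal_of_not_le_center [Group.IsPerfect G] [IsSimpleGroup (G ⧸ center G)]
    {N : Subgroup G} [hN : N.Normal] (hNZ : ¬N ≤ center G) : N = ⊤ := by
  let π := QuotientGroup.mk' (center G)
  have map_ne_bot : N.map π ≠ ⊥ := by
    rwa [Ne, Subgroup.map_eq_bot_iff, QuotientGroup.ker_mk']
  have map_eq_top : N.map π = ⊤ :=
    (hN.map π (QuotientGroup.mk'_surjective _)).eq_bot_or_eq_top.resolve_left map_ne_bot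
  have sup_center_eq_top : N ⊔ center G = ⊤ := by
    rw [← QuotientGroup.ker_mk' (center G), ← comap_map_eq, map_eq_top, comap_top]
  rw [← top_le_iff, ← Group.IsPerfect.commutator_eq_top (G := G)]
  exact hN.commutator_le_of_self_sup_commutative_eq_top sup_center_eq_top inferInstance

end Group

section NoncentralOfTrace

variable {n R : Type*} [Fintype n] [DecidableEq n] [CommRing R]

variable (n) in
/-- The noncentral elements of `SL(n, R)` of trace `t`. For `n = 2` over a domain this is the
analogue of `X̃_t`, with `A ≠ ±1` in a form that is visibly invariant under conjugation. -/
def noncentralOfTrace (t : R) : Set (Matrix.SpecialLinearGroup n R) :=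
  {A | trace (A : Matrix n n R) = t ∧ A ∉ center (Matrix.SpecialLinearGroup n R)}

theorem trace_coe_conj (g A : Matrix.SpecialLinearGroup n R) :
    trace ((g * A * g⁻¹ : Matrix.SpecialLinearGroup n R) : Matrix n n R) =
      trace (A : Matrix n n R) := by
  rw [Matrix.SpecialLinearGroup.coe_mul, trace_mul_comm, ← Matrix.SpecialLinearGroup.coe_mul,
    inv_mul_cancel_left]

theorem conj_mem_noncentralOfTrace {t : R} {A : Matrix.SpecialLinearGroup n R}
    (hA : A ∈ noncentralOfTrace n t) (g : Matrix.SpecialLinearGroup n R) :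
    g * A * g⁻¹ ∈ noncentralOfTrace n t :=
  ⟨(trace_coe_conj g A).trans hA.1, by
    rw [← Normal.mem_comm_iff inferInstance, inv_mul_cancel_left]; exact hA.2⟩

theorem normal_closure_noncentralOfTrace (t : R) : (closure (noncentralOfTrace n t)).Normal :=
  normal_closure_of_conj_mem fun _ ↦ conj_mem_noncentralOfTrace

end NoncentralOfTrace

section SL2

theorem mem_center_SL2_iff {R : Type*} [CommRing R] [NoZeroDivisors R] {A : SL(2, R)} :
    A ∈ center SL(2, R) ↔
      (A : Matrix (Fin 2) (Fin 2) R) = 1 ∨ (A : Matrix (Fin 2) (Fin 2) R) = -1 := by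
  simp only [Matrix.SpecialLinearGroup.mem_center_iff, Fintype.card_fin, sq_eq_one_iff,
    or_and_right, exists_or, exists_eq_left, map_one, map_neg]
  exact or_congr eq_comm eq_comm

/-- The companion matrix of `X ^ 2 - t X + 1`, as an element of `SL(2, R)` of trace `t`. -/
def companionSL2 {R : Type*} [CommRing R] (t : R) : SL(2, R) :=
  ⟨!![0, -1; 1, t], by simp [det_fin_two_of]⟩

theorem companionSL2_mem_noncentralOfTrace {R : Type*} [CommRing R] [Nontrivial R] (t : R) :
    companionSL2 t ∈ noncentralOfTrace (Fin 2) t := by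
  refine ⟨by simp [companionSL2, trace_fin_two_of], fun hcenter ↦ ?_⟩
  obtain ⟨r, -, hr⟩ := Matrix.SpecialLinearGroup.mem_center_iff.1 hcenter
  simpa [companionSL2] using congrFun₂ hr 1 0

variable {F : Type*} [Field F]

theorem SL2_eq_top_of_normal_of_not_le_center (hF : ∃ a : F, a ≠ 0 ∧ a ^ 2 ≠ 1)
    {N : Subgroup SL(2, F)} [N.Normal] (hN : ¬N ≤ center SL(2, F)) : N = ⊤ := by
  obtain ⟨a, ha, ha_sq⟩ := hF
  have : Group.IsPerfect SL(2, F) := ⟨SL2.commutator_eq_top ha ha_sq⟩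
  have : IsSimpleGroup PSL(2, F) := ProjectiveSpecialLinearGroup.rank_two_simple' ⟨a, ha, ha_sq⟩
  exact eq_top_of_normal_of_not_le_center hN

theorem Xt_generates_SL2C_general (hF : ∃ a : F, a ≠ 0 ∧ a ^ 2 ≠ 1) (t : F) :
    closure (noncentralOfTrace (Fin 2) t) = ⊤ := by
  have := normal_closure_noncentralOfTrace (n := Fin 2) t
  have hmem := companionSL2_mem_noncentralOfTrace t
  exact SL2_eq_top_of_normal_of_not_le_center hF fun hle ↦ hmem.2 (hle (subset_closure hmem))

end SL2

theorem XtSL_eq_noncentralOfTrace (t : ℂ) : XtSL t = noncentralOfTrace (Fin 2) t := by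
  simp only [XtSL, noncentralOfTrace, mem_center_SL2_iff, not_or, ne_eq]

/-- for every `t ∈ ℂ`, the subset `X̃_t` generates `SL(2,ℂ)` as a group. -/
theorem Xt_generates_SL2C (t : ℂ) : Subgroup.closure (XtSL t) = ⊤ := by
  rw [XtSL_eq_noncentralOfTrace]
  exact Xt_generates_SL2C_general ⟨2, by norm_num, by norm_num⟩ t
end

section
/- For every τ ∈ 𝒯 and every g ∈ PSL(2,ℂ): g commutes with f_τ if and only if g ∈ H_τ. In other words, H_τ is exactly the centralizer of f_τ in PSL(2,ℂ), i.e. the stabilizer of f_τ under the right conjugation action f · g := g⁻¹ f g of PSL(2,ℂ) on itself. -/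
/-!
The fibres of `π` are the pairs `{A, -A}`, so `g` commutes with `f_τ` exactly when lifts `B` of `g`
and `A` of `f_τ` satisfy `BA = ±AB`. The sign `-` makes `A` conjugate to `-A`, hence `tr A = 0`.
So for `τ ≠ [0]` the lifts themselves commute, while for `τ = [0]` the sign `-` contributes the
matrices that swap the two eigenlines of `A`.
-/

open Matrix

/-- `PSL(2,ℂ) = SL(2,ℂ)/{±I}` (the center of `SL(2,ℂ)` is `{±I}`). -/
abbrev PSL2C := Matrix.ProjectiveSpecialLinearGroup (Fin 2) ℂ

/-- The projection `π : SL(2,ℂ) → PSL(2,ℂ)`. -/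
def prSL : SL2C →* PSL2C := QuotientGroup.mk' (Subgroup.center SL2C)

/-- `X_τ` for `τ = [t]`: the nontrivial elements of `PSL(2,ℂ)` admitting a lift of
trace `t` or `−t`. -/
def XtauP (t : ℂ) : Set PSL2C :=
  {f | f ≠ 1 ∧ ∃ A : SL2C, prSL A = f ∧
    (Matrix.trace (A : Matrix (Fin 2) (Fin 2) ℂ) = t ∨
     Matrix.trace (A : Matrix (Fin 2) (Fin 2) ℂ) = -t)}

/-- `H_[2]`: the image in `PSL(2,ℂ)` of the upper unitriangular matrices. -/
def HparP : Set PSL2C :=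
  {f | ∃ B : SL2C, prSL B = f ∧ ∃ v : ℂ, (B : Matrix (Fin 2) (Fin 2) ℂ) = !![1, v; 0, 1]}

/-- `H_τ` for `τ ∉ {[0],[2]}`: the image in `PSL(2,ℂ)` of the diagonal matrices. -/
def HdiagP : Set PSL2C :=
  {f | ∃ B : SL2C, prSL B = f ∧
    ∃ μ : ℂ, μ ≠ 0 ∧ (B : Matrix (Fin 2) (Fin 2) ℂ) = !![μ, 0; 0, μ⁻¹]}

/-- `H_[0]`: the image in `PSL(2,ℂ)` of the diagonal and antidiagonal matrices. -/
def HzeroP : Set PSL2C :=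
  HdiagP ∪ {f | ∃ B : SL2C, prSL B = f ∧
    ∃ μ : ℂ, μ ≠ 0 ∧ (B : Matrix (Fin 2) (Fin 2) ℂ) = !![0, μ; -μ⁻¹, 0]}

open scoped MatrixGroups

lemma ne_inv_of_add_inv_ne_two {K : Type*} [Field K] {x : K} (hx : x ≠ 0) (h2 : x + x⁻¹ ≠ 2)
    (h2' : x + x⁻¹ ≠ -2) : x ≠ x⁻¹ := by
  rw [ne_eq, self_eq_inv₀]
  rintro (rfl | rfl | rfl)
  · exact h2' (by norm_num)
  · exact hx rfl
  · exact h2 (by norm_num)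

section Matrix

lemma trace_eq_of_semiconjBy {n R : Type*} [Fintype n] [DecidableEq n] [CommSemiring R]
    {A A' B : Matrix n n R} (hB : IsUnit B) (h : SemiconjBy B A A') : trace A = trace A' := by
  obtain ⟨u, rfl⟩ := hB
  rw [← trace_units_conj u A, h.eq, Units.mul_inv_cancel_right]

lemma commute_unipotent_iff {R : Type*} [Ring R] {B : Matrix (Fin 2) (Fin 2) R} :
    Commute B !![1, 1; 0, 1] ↔ B 1 0 = 0 ∧ B 0 0 = B 1 1 := by
  rw [eta_fin_two B]
  simp +contextual [commute_iff_eq, add_comm (B 0 1)]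

section Diagonal

variable {R : Type*} [CommSemiring R] [IsCancelMulZero R]

lemma semiconjBy_diagonal_iff {n : Type*} [Fintype n] [DecidableEq n] {v w : n → R}
    {B : Matrix n n R} :
    SemiconjBy B (diagonal v) (diagonal w) ↔ ∀ i j, v j ≠ w i → B i j = 0 := by
  simp only [SemiconjBy, ← Matrix.ext_iff, mul_diagonal, diagonal_mul, mul_comm (w _),
    mul_eq_mul_left_iff, or_iff_not_imp_left, ne_eq]

lemma commute_diagonal_iff_of_ne {B : Matrix (Fin 2) (Fin 2) R} {a d : R} (had : a ≠ d) :
    Commute B !![a, 0; 0, d] ↔ B 0 1 = 0 ∧ B 1 0 = 0 := by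
  rw [Commute, ← diagonal_vec2, semiconjBy_diagonal_iff]
  simp [Fin.forall_fin_two, had, had.symm]

end Diagonal

lemma semiconjBy_neg_diagonal_iff_of_ne_neg {R : Type*} [CommRing R] [NoZeroDivisors R]
    {B : Matrix (Fin 2) (Fin 2) R} {a : R} (ha : a ≠ -a) :
    SemiconjBy B !![a, 0; 0, -a] (-!![a, 0; 0, -a]) ↔ B 0 0 = 0 ∧ B 1 1 = 0 := by
  rw [← diagonal_vec2, diagonal_neg, semiconjBy_diagonal_iff]
  simp [Fin.forall_fin_two, ha]

end Matrix

section SpecialLinearGroup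

lemma SL2_det_eq_one {R : Type*} [CommRing R] (B : SL(2, R)) :
    B 0 0 * B 1 1 - B 0 1 * B 1 0 = 1 := by
  rw [← det_fin_two, B.det_coe]

section Domain

variable {R : Type*} [CommRing R] [NoZeroDivisors R]

lemma SL2_mem_center_iff {A : SL(2, R)} : A ∈ Subgroup.center SL(2, R) ↔ A = 1 ∨ A = -1 := by
  constructor
  · rw [Matrix.SpecialLinearGroup.mem_center_iff]
    rintro ⟨r, hr, hA⟩
    have hr : r = 1 ∨ r = -1 := by simpa using hr
    refine hr.imp ?_ ?_ <;> rintro rfl <;> refine Subtype.ext ?_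
    · rw [← hA, map_one, Matrix.SpecialLinearGroup.coe_one]
    · rw [← hA, map_neg, map_one, Matrix.SpecialLinearGroup.coe_neg,
        Matrix.SpecialLinearGroup.coe_one]
  · rintro (rfl | rfl) <;> simp [Subgroup.mem_center_iff]

lemma SL2_eq_unipotent_or_neg_iff {B : SL(2, R)} :
    (∃ v, (B : Matrix (Fin 2) (Fin 2) R) = !![1, v; 0, 1]) ∨
      (∃ v, ((-B : SL(2, R)) : Matrix (Fin 2) (Fin 2) R) = !![1, v; 0, 1]) ↔
    B 1 0 = 0 ∧ B 0 0 = B 1 1 := by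
  constructor
  · rintro (⟨v, hB⟩ | ⟨v, hB⟩)
    · simp [hB]
    · rw [Matrix.SpecialLinearGroup.coe_neg, neg_eq_iff_eq_neg] at hB
      simp [hB]
  · rintro ⟨h10, h00⟩
    have h11 : B 1 1 = 1 ∨ B 1 1 = -1 := by
      rw [← mul_self_eq_one_iff]
      simpa [h10, h00] using SL2_det_eq_one B
    refine h11.imp (fun h11 ↦ ⟨B 0 1, ?_⟩) (fun h11 ↦ ⟨-B 0 1, ?_⟩)
    · exact (eta_fin_two _).trans (by rw [h10, h00, h11])
    · exact (eta_fin_two _).trans (by simp [h10, h00, h11])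

end Domain

variable {K : Type*} [Field K] {B : SL(2, K)}

lemma SL2_eq_diagonal_iff :
    (∃ μ, μ ≠ 0 ∧ (B : Matrix (Fin 2) (Fin 2) K) = !![μ, 0; 0, μ⁻¹]) ↔
      B 0 1 = 0 ∧ B 1 0 = 0 := by
  constructor
  · rintro ⟨μ, -, hB⟩
    simp [hB]
  · rintro ⟨h01, h10⟩
    have hdet : B 0 0 * B 1 1 = 1 := by simpa [h01] using SL2_det_eq_one B
    refine ⟨B 0 0, left_ne_zero_of_mul_eq_one hdet, ?_⟩
    rw [← eq_inv_of_mul_eq_one_right hdet]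
    exact (eta_fin_two _).trans (by rw [h01, h10])

lemma SL2_eq_antidiagonal_iff :
    (∃ μ, μ ≠ 0 ∧ (B : Matrix (Fin 2) (Fin 2) K) = !![0, μ; -μ⁻¹, 0]) ↔
      B 0 0 = 0 ∧ B 1 1 = 0 := by
  constructor
  · rintro ⟨μ, -, hB⟩
    simp [hB]
  · rintro ⟨h00, h11⟩
    have hdet : B 0 1 * -B 1 0 = 1 := by simpa [h00] using SL2_det_eq_one B
    refine ⟨B 0 1, left_ne_zero_of_mul_eq_one hdet, ?_⟩
    rw [← eq_inv_of_mul_eq_one_right hdet, neg_neg]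
    exact (eta_fin_two _).trans (by rw [h00, h11])

end SpecialLinearGroup

section Projection

variable {A B : SL2C}

lemma prSL_surjective : Function.Surjective prSL := QuotientGroup.mk'_surjective _

lemma prSL_eq_iff : prSL A = prSL B ↔ A = B ∨ A = -B := by
  rw [← div_eq_one, ← map_div, ← MonoidHom.mem_ker, prSL, QuotientGroup.ker_mk',
    SL2_mem_center_iff, div_eq_one, div_eq_iff_eq_mul, neg_one_mul]

lemma exists_prSL_eq_and_iff {P : SL2C → Prop} :
    (∃ B', prSL B' = prSL B ∧ P B') ↔ P B ∨ P (-B) := by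
  simp only [prSL_eq_iff, or_and_right, exists_or, exists_eq_left]

lemma prSL_mem_HparP_iff : prSL B ∈ HparP ↔ B 1 0 = 0 ∧ B 0 0 = B 1 1 :=
  exists_prSL_eq_and_iff.trans SL2_eq_unipotent_or_neg_iff

lemma prSL_mem_HdiagP_iff : prSL B ∈ HdiagP ↔ B 0 1 = 0 ∧ B 1 0 = 0 :=
  exists_prSL_eq_and_iff.trans (by rw [SL2_eq_diagonal_iff, SL2_eq_diagonal_iff]; simp)

lemma prSL_mem_HzeroP_iff :
    prSL B ∈ HzeroP ↔ (B 0 1 = 0 ∧ B 1 0 = 0) ∨ (B 0 0 = 0 ∧ B 1 1 = 0) :=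
  or_congr prSL_mem_HdiagP_iff <|
    exists_prSL_eq_and_iff.trans (by rw [SL2_eq_antidiagonal_iff, SL2_eq_antidiagonal_iff]; simp)

lemma commute_prSL_iff :
    Commute (prSL B) (prSL A) ↔
      Commute (B : Matrix (Fin 2) (Fin 2) ℂ) A ∨
        SemiconjBy (B : Matrix (Fin 2) (Fin 2) ℂ) A (-A) := by
  have eq_iff_coe_eq {X Y : SL2C} : X = Y ↔ (X : Matrix (Fin 2) (Fin 2) ℂ) = Y := Subtype.ext_iff
  simp [commute_iff_eq, SemiconjBy, ← map_mul, prSL_eq_iff, eq_iff_coe_eq]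

lemma commute_prSL_iff_of_trace_ne_zero (hA : trace (A : Matrix (Fin 2) (Fin 2) ℂ) ≠ 0) :
    Commute (prSL B) (prSL A) ↔ Commute (B : Matrix (Fin 2) (Fin 2) ℂ) A := by
  refine commute_prSL_iff.trans (or_iff_left fun h ↦ hA ?_)
  have hB : IsUnit (B : Matrix (Fin 2) (Fin 2) ℂ) :=
    (Group.isUnit B).map Matrix.SpecialLinearGroup.coeMonoidHom
  rw [← CharZero.eq_neg_self_iff, ← trace_neg]
  exact trace_eq_of_semiconjBy hB h

lemma commute_prSL_unipotent_iff (hA : (A : Matrix (Fin 2) (Fin 2) ℂ) = !![1, 1; 0, 1]) :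
    Commute (prSL B) (prSL A) ↔ prSL B ∈ HparP := by
  have htrace : trace (A : Matrix (Fin 2) (Fin 2) ℂ) ≠ 0 := by
    rw [hA, trace_fin_two_of]
    norm_num
  rw [commute_prSL_iff_of_trace_ne_zero htrace, hA, commute_unipotent_iff, prSL_mem_HparP_iff]

variable {lam : ℂ}

lemma commute_prSL_diagonal_iff (hA : (A : Matrix (Fin 2) (Fin 2) ℂ) = !![lam, 0; 0, lam⁻¹])
    (hne : lam ≠ lam⁻¹) (hadd : lam + lam⁻¹ ≠ 0) :
    Commute (prSL B) (prSL A) ↔ prSL B ∈ HdiagP := by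
  have htrace : trace (A : Matrix (Fin 2) (Fin 2) ℂ) ≠ 0 := by rwa [hA, trace_fin_two_of]
  rw [commute_prSL_iff_of_trace_ne_zero htrace, hA, commute_diagonal_iff_of_ne hne,
    prSL_mem_HdiagP_iff]

lemma commute_prSL_traceless_diagonal_iff
    (hA : (A : Matrix (Fin 2) (Fin 2) ℂ) = !![lam, 0; 0, lam⁻¹]) (hlam : lam ≠ 0)
    (hadd : lam + lam⁻¹ = 0) :
    Commute (prSL B) (prSL A) ↔ prSL B ∈ HzeroP := by
  have hne : lam ≠ -lam := mt CharZero.eq_neg_self_iff.mp hlam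
  rw [← neg_eq_of_add_eq_zero_right hadd] at hA
  rw [commute_prSL_iff, hA, commute_diagonal_iff_of_ne hne,
    semiconjBy_neg_diagonal_iff_of_ne_neg hne, prSL_mem_HzeroP_iff]

end Projection

/-- for every `τ ∈ 𝒯` and `g ∈ PSL(2,ℂ)`, `g` commutes with `f_τ` iff
`g ∈ H_τ`; i.e. `H_τ` is the centralizer (= conjugation stabilizer) of `f_τ`. -/
theorem centralizer_of_ftau :
    (∀ A : SL2C, (A : Matrix (Fin 2) (Fin 2) ℂ) = !![1, 1; 0, 1] →
      ∀ g : PSL2C, (g * prSL A = prSL A * g ↔ g ∈ HparP)) ∧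
    (∀ t lam : ℂ, t ≠ 2 → t ≠ -2 → t ≠ 0 → lam ≠ 0 → lam + lam⁻¹ = t →
      ∀ A : SL2C, (A : Matrix (Fin 2) (Fin 2) ℂ) = !![lam, 0; 0, lam⁻¹] →
      ∀ g : PSL2C, (g * prSL A = prSL A * g ↔ g ∈ HdiagP)) ∧
    (∀ lam : ℂ, lam ≠ 0 → lam + lam⁻¹ = 0 →
      ∀ A : SL2C, (A : Matrix (Fin 2) (Fin 2) ℂ) = !![lam, 0; 0, lam⁻¹] →
      ∀ g : PSL2C, (g * prSL A = prSL A * g ↔ g ∈ HzeroP)) := by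
  refine ⟨fun A hA g ↦ ?_, fun t lam h2 h2' h0 hlam ht A hA g ↦ ?_, fun lam hlam ht A hA g ↦ ?_⟩ <;>
    obtain ⟨B, rfl⟩ := prSL_surjective g
  · exact commute_prSL_unipotent_iff hA
  · subst ht
    exact commute_prSL_diagonal_iff hA (ne_inv_of_add_inv_ne_two hlam h2 h2') h0
  · exact commute_prSL_traceless_diagonal_iff hA hlam ht
end

section
/- For every τ ∈ 𝒯, the subset X_τ generates PSL(2,ℂ) as a group, i.e. the subgroup of PSL(2,ℂ) generated by X_τ is all of PSL(2,ℂ). -/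
/-!
The trace is a conjugacy invariant, so `X_τ` is stable under conjugation and the subgroup it
generates is normal. Every trace is realised by a companion matrix, which is never central, so this
subgroup is nontrivial. As `PSL(2, F)` is simple for every field `F` with more than three elements,
the subgroup is the whole group.
-/

open Matrix

section ConjugationInvariant

variable {G : Type*} [Group G] {s : Set G}

lemma normal_closure_of_forall_conj_mem (hs : ∀ x ∈ s, ∀ g : G, g * x * g⁻¹ ∈ s) :
    (Subgroup.closure s).Normal := by
  have hconj : Group.conjugatesOfSet s ⊆ s := fun y hy ↦ by
    obtain ⟨x, hx, hxy⟩ := Group.mem_conjugatesOfSet_iff.1 hy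
    obtain ⟨g, rfl⟩ := isConj_iff.1 hxy
    exact hs x hx g
  rw [← hconj.antisymm Group.subset_conjugatesOfSet]
  exact Subgroup.normalClosure_normal

lemma closure_eq_top_of_forall_conj_mem [IsSimpleGroup G]
    (hs : ∀ x ∈ s, ∀ g : G, g * x * g⁻¹ ∈ s) {x : G} (hx : x ∈ s) (hx1 : x ≠ 1) :
    Subgroup.closure s = ⊤ := by
  refine (normal_closure_of_forall_conj_mem hs).eq_bot_or_eq_top.resolve_left fun hbot ↦ ?_
  exact hx1 ((Subgroup.closure_eq_bot_iff.1 hbot) hx)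

end ConjugationInvariant

section ProjectiveTrace

open scoped MatrixGroups

variable {n R : Type*} [DecidableEq n] [Fintype n] [CommRing R]

lemma trace_conj_specialLinearGroup (A B : Matrix.SpecialLinearGroup n R) :
    trace ((B * A * B⁻¹ : Matrix.SpecialLinearGroup n R) : Matrix n n R) =
      trace (A : Matrix n n R) := by
  rw [Matrix.SpecialLinearGroup.coe_mul, trace_mul_comm, ← Matrix.SpecialLinearGroup.coe_mul,
    inv_mul_cancel_left]

/-- The set of nontrivial elements of the projective special linear group that have a lift with
trace in `T`. Any set `T` of traces is allowed; the `X_τ` of the theorem is the case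
`T = τ = {t, -t}`. -/
def nontrivialWithTraceIn (T : Set R) : Set (ProjectiveSpecialLinearGroup n R) :=
  {f | f ≠ 1 ∧ ∃ A : Matrix.SpecialLinearGroup n R,
    (A : ProjectiveSpecialLinearGroup n R) = f ∧ trace (A : Matrix n n R) ∈ T}

lemma conj_mem_nontrivialWithTraceIn {T : Set R} {f : ProjectiveSpecialLinearGroup n R}
    (hf : f ∈ nontrivialWithTraceIn T) (g : ProjectiveSpecialLinearGroup n R) :
    g * f * g⁻¹ ∈ nontrivialWithTraceIn T := by
  obtain ⟨hf1, A, rfl, hA⟩ := hf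
  obtain ⟨B, rfl⟩ := QuotientGroup.mk_surjective g
  exact ⟨conj_eq_one_iff.not.2 hf1, B * A * B⁻¹, rfl, by rwa [trace_conj_specialLinearGroup]⟩

lemma exists_notMem_center_trace_eq [Nontrivial R] (t : R) :
    ∃ A : SL(2, R), A ∉ Subgroup.center SL(2, R) ∧ trace (A : Matrix (Fin 2) (Fin 2) R) = t := by
  refine ⟨⟨!![t, -1; 1, 0], by simp [det_fin_two]⟩, fun hA ↦ ?_, by simp [trace_fin_two]⟩
  obtain ⟨r, -, hr⟩ := Matrix.SpecialLinearGroup.mem_center_iff.1 hA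
  have h10 : (0 : R) = 1 := by simpa using congr_fun₂ hr 1 0
  exact zero_ne_one h10

lemma nontrivialWithTraceIn_nonempty [Nontrivial R] {T : Set R} (hT : T.Nonempty) :
    (nontrivialWithTraceIn T : Set PSL(2, R)).Nonempty := by
  obtain ⟨t, ht⟩ := hT
  obtain ⟨A, hA, rfl⟩ := exists_notMem_center_trace_eq t
  exact ⟨A, mt (QuotientGroup.eq_one_iff A).1 hA, A, rfl, ht⟩

lemma XtauP_eq_nontrivialWithTraceIn (t : ℂ) : XtauP t = nontrivialWithTraceIn {t, -t} := rfl

theorem Xtau_generates_PSL2C_general {F : Type*} [Field F] (hF : ∃ a : F, a ≠ 0 ∧ a ^ 2 ≠ 1)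
    {T : Set F} (hT : T.Nonempty) :
    Subgroup.closure (nontrivialWithTraceIn T : Set PSL(2, F)) = ⊤ := by
  have : IsSimpleGroup PSL(2, F) := ProjectiveSpecialLinearGroup.rank_two_simple' hF
  obtain ⟨f, hf⟩ := nontrivialWithTraceIn_nonempty hT
  exact closure_eq_top_of_forall_conj_mem (fun _ ↦ conj_mem_nontrivialWithTraceIn) hf hf.1

end ProjectiveTrace

/-- for every `τ ∈ 𝒯`, the subset `X_τ` generates `PSL(2,ℂ)` as a group. -/
theorem Xtau_generates_PSL2C (t : ℂ) : Subgroup.closure (XtauP t) = ⊤ := by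
  rw [XtauP_eq_nontrivialWithTraceIn]
  exact Xtau_generates_PSL2C_general ⟨2, by norm_num, by norm_num⟩ (Set.insert_nonempty t {-t})
end
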